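/- (Lemma 4.2) Fix an integer d ≥ 1, m > 0 and x ∈ ℝ^d. The family of probability measures {V'_{x,a} : 0 < a < 1} on Ω(x) is tight: for every η > 0 there exists a compact set K ⊆ Ω(x) such that V'_{x,a}(Ω(x) ∖ K) < η for all 0 < a < 1. -/

import Mathlib

open MeasureTheory Filter Topology Real Set
open scoped RealInnerProductSpace ENNReal unitInterval

noncomputable section

/-- `ℝ^d` as a Euclidean space. -/
abbrev Ed (d : ℕ) := EuclideanSpace ℝ (Fin d)

/-- The space of continuous paths `[0,1] → ℝ^d`, with the uniform metric. -/
abbrev PathSp (d : ℕ) := C(unitInterval, Ed d)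

instance (d : ℕ) : MeasurableSpace (PathSp d) := borel _
instance (d : ℕ) : BorelSpace (PathSp d) := ⟨rfl⟩

/-- Evaluation of a path at a real time, clamped to `[0,1]`. -/
def evalAt {d : ℕ} (ω : PathSp d) (t : ℝ) : Ed d := ω (Set.projIcc 0 1 zero_le_one t)

/-- `Ω(x)`: continuous paths starting at `x`. -/
abbrev Omega1 {d : ℕ} (x : Ed d) := {ω : PathSp d // ω 0 = x}

/-- `Ω(x,y)`: continuous paths from `x` to `y`. -/
abbrev Omega2 {d : ℕ} (x y : Ed d) := {ω : PathSp d // ω 0 = x ∧ ω 1 = y}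

/-- clamp a real number to `[0,1]`. -/
def clamp01 (r : ℝ) : ℝ := min 1 (max 0 r)

lemma clamp01_of_nonpos {r : ℝ} (h : r ≤ 0) : clamp01 r = 0 := by
  rw [clamp01, max_eq_left h, min_eq_right zero_le_one]

lemma clamp01_of_one_le {r : ℝ} (h : 1 ≤ r) : clamp01 r = 1 := by
  rw [clamp01, max_eq_right (zero_le_one.trans h), min_eq_left h]

lemma clamp01_continuous : Continuous clamp01 :=
  continuous_const.min (continuous_const.max continuous_id)

/-- The piecewise linear path starting at `x` with `N` steps given by the increments `v i`,
the `i`-th step being linearly parametrized by `[i/N, (i+1)/N]`. -/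
def pwLinE {d : ℕ} (x : Ed d) (N : ℕ) (v : Fin N → Ed d) : PathSp d :=
  ⟨fun t => x + ∑ i : Fin N, clamp01 ((N : ℝ) * (t : ℝ) - ((i : ℕ) : ℝ)) • v i, by
    refine continuous_const.add (continuous_finset_sum _ fun i _ => ?_)
    exact ((clamp01_continuous.comp
      ((continuous_const.mul continuous_subtype_val).sub continuous_const)).smul
      continuous_const)⟩

lemma pwLinE_zero {d : ℕ} (x : Ed d) (N : ℕ) (v : Fin N → Ed d) :
    pwLinE x N v 0 = x := by
  show x + ∑ i : Fin N, clamp01 ((N : ℝ) * ((0 : unitInterval) : ℝ) - ((i : ℕ) : ℝ)) • v i = x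
  have h : ∀ i : Fin N, clamp01 ((N : ℝ) * ((0 : unitInterval) : ℝ) - ((i : ℕ) : ℝ)) = 0 := by
    intro i
    apply clamp01_of_nonpos
    have h0 : ((0 : unitInterval) : ℝ) = 0 := rfl
    rw [h0, mul_zero, zero_sub]
    exact neg_nonpos.mpr (Nat.cast_nonneg (i : ℕ))
  simp only [h, zero_smul, Finset.sum_const_zero, add_zero]

lemma pwLinE_one {d : ℕ} (x : Ed d) (N : ℕ) (v : Fin N → Ed d) :
    pwLinE x N v 1 = x + ∑ i : Fin N, v i := by
  show x + ∑ i : Fin N, clamp01 ((N : ℝ) * ((1 : unitInterval) : ℝ) - ((i : ℕ) : ℝ)) • v i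
      = x + ∑ i : Fin N, v i
  have h : ∀ i : Fin N, clamp01 ((N : ℝ) * ((1 : unitInterval) : ℝ) - ((i : ℕ) : ℝ)) = 1 := by
    intro i
    apply clamp01_of_one_le
    have h1 : ((1 : unitInterval) : ℝ) = 1 := rfl
    have h2 : ((i : ℕ) : ℝ) + 1 ≤ (N : ℝ) := by
      exact_mod_cast Nat.succ_le_of_lt i.isLt
    rw [h1, mul_one]; linarith
  simp only [h, one_smul]

/-- Piecewise linear element of `Ω(x)` with increments `v`. -/
def pwLin1 {d : ℕ} (x : Ed d) (N : ℕ) (v : Fin N → Ed d) : Omega1 x :=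
  ⟨pwLinE x N v, pwLinE_zero x N v⟩

/-- Piecewise linear element of `Ω(x,y)` with increments `v` summing to `y - x`. -/
def pwLin2 {d : ℕ} (x y : Ed d) (N : ℕ) (v : Fin N → Ed d)
    (h : x + ∑ i : Fin N, v i = y) : Omega2 x y :=
  ⟨pwLinE x N v, pwLinE_zero x N v, by rw [pwLinE_one, h]⟩

/-- the point preceding `x_i` in the list `x, x_1, …, x_N`. -/
def prevPt {d : ℕ} (x : Ed d) {N : ℕ} (xs : Fin N → Ed d) (i : Fin N) : Ed d :=
  if (i : ℕ) = 0 then x else xs ⟨(i : ℕ) - 1, lt_of_le_of_lt (Nat.pred_le _) i.isLt⟩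

/-- The discrete measure `W_{x,a,N}`, i.e. the measure
`∏_{i=1}^N (2πa²)^{-d/2} exp(-|x_i - x_{i-1}|²/(2a²)) dx_1 … dx_N` (with `x_0 = x`)
on `N`-step piecewise linear paths, placed on `{a²N} × Ω(x) ⊆ ℝ × Ω(x)`.
For `N = 0` this is the Dirac measure at `(0, constant path at x)`. -/
def WxaN {d : ℕ} (x : Ed d) (a : ℝ) (N : ℕ) : Measure (ℝ × Omega1 x) :=
  Measure.map
    (fun xs : Fin N → Ed d =>
      ((a ^ 2 * N : ℝ), pwLin1 x N fun i => xs i - prevPt x xs i))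
    (volume.withDensity fun xs : Fin N → Ed d =>
      ENNReal.ofReal (∏ i : Fin N,
        (2 * π * a ^ 2) ^ (-(d : ℝ) / 2) *
          Real.exp (-‖xs i - prevPt x xs i‖ ^ 2 / (2 * a ^ 2))))

/-- The approximating probability measure
`W_{x,a} = (1 - e^{-m²a²/2}) Σ_{N=0}^∞ e^{-m²a²N/2} W_{x,a,N}`. -/
def Wxa {d : ℕ} (x : Ed d) (m a : ℝ) : Measure (ℝ × Omega1 x) :=
  ENNReal.ofReal (1 - Real.exp (-m ^ 2 * a ^ 2 / 2)) •
    Measure.sum fun N : ℕ =>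
      ENNReal.ofReal (Real.exp (-m ^ 2 * a ^ 2 * N / 2)) • WxaN x a N

/-- The lattice step of length `a` in direction `p.1`, forwards or backwards
according to `p.2`. -/
def stepVec {d : ℕ} (a : ℝ) (p : Fin d × Bool) : Ed d :=
  (if p.2 then a else -a) • EuclideanSpace.single p.1 (1 : ℝ)

/-- The normalized counting measure `V'_{x,a,N}` giving mass `(2d)^{-N}` to each
(piecewise linearly parametrized) `N`-step nearest-neighbour lattice path in `x + aℤ^d`
starting at `x`.  For `N = 0` it is the Dirac measure at the constant path. -/
def VxaN {d : ℕ} (x : Ed d) (a : ℝ) (N : ℕ) : Measure (Omega1 x) :=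
  Measure.sum fun s : Fin N → Fin d × Bool =>
    (((2 * d : ℕ) : ℝ≥0∞) ^ N)⁻¹ •
      Measure.dirac (pwLin1 x N fun i => stepVec a (s i))

/-- The approximating probability measure
`V'_{x,a} = (1 - e^{-m²a²/(2d)}) Σ_{N=0}^∞ e^{-m²a²N/(2d)} V'_{x,a,N}`. -/
def Vxa {d : ℕ} (x : Ed d) (m a : ℝ) : Measure (Omega1 x) :=
  ENNReal.ofReal (1 - Real.exp (-m ^ 2 * a ^ 2 / (2 * d))) •
    Measure.sum fun N : ℕ =>
      ENNReal.ofReal (Real.exp (-m ^ 2 * a ^ 2 * N / (2 * d))) • VxaN x a N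

/-- `Wt` is the family of Wiener measures `(W_x^t)_{t>0}` on `Ω(x)`:
each `W_x^t` is a Borel probability measure, characterized by the characteristic
functions of its finite dimensional distributions
`∫ exp(i Σ_j ξ_j·ω(t_j)) dW_x^t = exp(-(t/2) Σ_j (t_j - t_{j-1}) |ξ_j + ⋯ + ξ_n|²
+ i x·(ξ_1 + ⋯ + ξ_n))` for all `0 = t_0 < t_1 < ⋯ < t_n ≤ 1`. -/
def IsWienerFamily {d : ℕ} (x : Ed d) (Wt : ℝ → Measure (Omega1 x)) : Prop :=
  ∀ t : ℝ, 0 < t → (IsProbabilityMeasure (Wt t) ∧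
    ∀ (n : ℕ) (ts : ℕ → ℝ), ts 0 = 0 → (∀ i < n, ts i < ts (i + 1)) → ts n ≤ 1 →
      ∀ ξ : Fin n → Ed d,
        (∫ ω : Omega1 x, Complex.exp (Complex.I *
            ((∑ i : Fin n, ⟪ξ i, evalAt ω.1 (ts ((i : ℕ) + 1))⟫ : ℝ) : ℂ)) ∂(Wt t))
          = Complex.exp
              (((-(t / 2) * ∑ i : Fin n,
                  (ts ((i : ℕ) + 1) - ts (i : ℕ)) * ‖∑ j ∈ Finset.Ici i, ξ j‖ ^ 2 : ℝ) : ℂ)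
                + Complex.I * ((⟪∑ j, ξ j, x⟫ : ℝ) : ℂ)))

/-!
Tightness comes from Kolmogorov's criterion, applied to the fourth moment and uniformly in `a`.

A path whose dyadic increments of level `n` are at most `δ n`, with `∑ δ n < ∞`, has a modulus of
continuity depending only on `δ`, by chaining; Arzelà–Ascoli makes the set of such paths with a
given starting point compact. If `E |ω s - ω t| ^ p ≤ M |s - t| ^ q` with `q > 1`, Markov's
inequality and a union bound over the `2 ^ n` dyadic intervals of each level put all but `ε` of the
mass on one such set, for a choice of `δ` that depends only on `p`, `q`, `M` and `ε`.

For an `N`-step walk the steps are symmetric, so the odd moments cancel and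
`E |ω s - ω t| ^ 4 ≤ 3 (a² N |s - t|) ^ 2`. Under `V'_{x,a}` the number of steps is geometric with
ratio `e ^ (-u)`, where `u = m² a² / (2 d)`; then `E N² ≤ 2 e ^ (-u) / (1 - e ^ (-u)) ^ 2 ≤ 2 / u²`,
the last step being `u / 2 ≤ sinh (u / 2)`. The powers of `a` cancel, leaving
`E |ω s - ω t| ^ 4 ≤ (24 d² / m⁴) |s - t| ^ 2` for every `a`.
-/

open ProbabilityTheory
open scoped NNReal BigOperators

section Chaining

variable {E : Type*} [PseudoEMetricSpace E]

/-- The dyadic point `k / 2 ^ n` of the unit interval, clamped to `1` when `2 ^ n < k`. -/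
def dyadicPt (n k : ℕ) : I :=
  projIcc 0 1 zero_le_one (k / 2 ^ n : ℝ)

/-- The largest dyadic point of level `n` below `t`. -/
def dyadicFloor (n : ℕ) (t : I) : I :=
  dyadicPt n ⌊2 ^ n * (t : ℝ)⌋₊

/-- The increments of `f` over the dyadic intervals of length `2 ^ (-n)` are at most `δ n`, for
every level `n`: the discrete modulus of continuity on which chaining operates. -/
def DyadicIncrementsLE (f : I → E) (δ : ℕ → ℝ≥0) : Prop :=
  ∀ n, ∀ k < 2 ^ n, edist (f (dyadicPt n k)) (f (dyadicPt n (k + 1))) ≤ δ n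

lemma dyadicPt_succ_two_mul (n k : ℕ) : dyadicPt (n + 1) (2 * k) = dyadicPt n k := by
  rw [dyadicPt, dyadicPt, pow_succ', Nat.cast_mul, Nat.cast_ofNat,
    mul_div_mul_left _ _ two_ne_zero]

lemma edist_dyadicPt_succ_le (n k : ℕ) :
    edist (dyadicPt n k) (dyadicPt n (k + 1)) ≤ ((2 ^ n)⁻¹ : ℝ≥0) := by
  refine (LipschitzWith.projIcc zero_le_one).edist_le_mul _ _ |>.trans_eq ?_
  rw [ENNReal.coe_one, one_mul, edist_nndist, ENNReal.coe_inj, ← NNReal.coe_inj, coe_nndist,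
    dist_comm, Real.dist_eq, Nat.cast_succ, add_div, add_sub_cancel_left, one_div, abs_inv,
    abs_of_pos (by positivity)]
  push_cast
  rfl

lemma floor_two_pow_mul_le (n : ℕ) (t : I) : ⌊2 ^ n * (t : ℝ)⌋₊ ≤ 2 ^ n :=
  Nat.floor_le_of_le (by
    push_cast
    exact mul_le_of_le_one_right (by positivity) t.2.2)

lemma floor_two_pow_succ_mul_div_two (n : ℕ) (t : I) :
    ⌊2 ^ (n + 1) * (t : ℝ)⌋₊ / 2 = ⌊2 ^ n * (t : ℝ)⌋₊ := by
  rw [← Nat.floor_div_ofNat, pow_succ', mul_assoc, mul_div_cancel_left₀ _ (by norm_num)]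

lemma tendsto_dyadicFloor (t : I) : Tendsto (fun n ↦ dyadicFloor n t) atTop (𝓝 t) := by
  have hfloor : Tendsto (fun n : ℕ ↦ (⌊2 ^ n * (t : ℝ)⌋₊ / 2 ^ n : ℝ)) atTop (𝓝 t) := by
    simpa only [Function.comp_def, mul_comm] using!
      (tendsto_nat_floor_mul_div_atTop t.2.1).comp
        (tendsto_pow_atTop_atTop_of_one_lt (one_lt_two (α := ℝ)))
  simpa only [projIcc_val] using!
    ((continuous_projIcc (h := zero_le_one' ℝ)).tendsto (t : ℝ)).comp hfloor

namespace DyadicIncrementsLE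

variable {f : I → E} {δ : ℕ → ℝ≥0}

lemma edist_le (h : DyadicIncrementsLE f δ) {n j k : ℕ} (hjk : j ≤ k) (hkj : k ≤ j + 1)
    (hk : k ≤ 2 ^ n) : edist (f (dyadicPt n j)) (f (dyadicPt n k)) ≤ δ n := by
  obtain rfl | rfl : k = j ∨ k = j + 1 := by lia
  · simp only [edist_self, zero_le]
  · exact h n j hk

lemma edist_dyadicFloor_succ_le (h : DyadicIncrementsLE f δ) (n : ℕ) (t : I) :
    edist (f (dyadicFloor n t)) (f (dyadicFloor (n + 1) t)) ≤ δ (n + 1) := by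
  rw [dyadicFloor, ← floor_two_pow_succ_mul_div_two, ← dyadicPt_succ_two_mul]
  exact h.edist_le (Nat.mul_div_le _ 2) (by lia) (floor_two_pow_mul_le _ t)

lemma edist_dyadicFloor_le_tsum (h : DyadicIncrementsLE f δ) (hf : Continuous f) (n : ℕ) (t : I) :
    edist (f (dyadicFloor n t)) (f t) ≤ ∑' m, (δ (n + m + 1) : ℝ≥0∞) :=
  edist_le_tsum_of_edist_le_of_tendsto (fun n ↦ (δ (n + 1) : ℝ≥0∞))
    (h.edist_dyadicFloor_succ_le · t) ((hf.tendsto t).comp (tendsto_dyadicFloor t)) n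

lemma edist_dyadicFloor_dyadicFloor_le (h : DyadicIncrementsLE f δ) {n : ℕ} {s t : I} (hst : s ≤ t)
    (hts : (t : ℝ) - s ≤ (2 ^ n)⁻¹) :
    edist (f (dyadicFloor n s)) (f (dyadicFloor n t)) ≤ δ n := by
  have hpow : (0 : ℝ) < 2 ^ n := by positivity
  refine h.edist_le (Nat.floor_mono (by gcongr)) ?_ (floor_two_pow_mul_le n t)
  rw [← Nat.floor_add_one (mul_nonneg hpow.le s.2.1)]
  refine Nat.floor_mono ?_
  calc 2 ^ n * (t : ℝ) = 2 ^ n * s + 2 ^ n * (t - s) := by ring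
    _ ≤ 2 ^ n * s + 2 ^ n * (2 ^ n)⁻¹ := by gcongr
    _ = 2 ^ n * s + 1 := by rw [mul_inv_cancel₀ hpow.ne']

/-- Chaining: `s` and `t` are joined through their level-`n` dyadic floors. -/
theorem edist_le_two_mul_tsum (h : DyadicIncrementsLE f δ) (hf : Continuous f) {n : ℕ} {s t : I}
    (hst : dist s t ≤ (2 ^ n)⁻¹) : edist (f s) (f t) ≤ 2 * ∑' m, (δ (n + m) : ℝ≥0∞) := by
  wlog hle : s ≤ t generalizing s t
  · rw [edist_comm]
    exact this (dist_comm s t ▸ hst) (le_of_not_ge hle)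
  have hts : (t : ℝ) - s ≤ (2 ^ n)⁻¹ :=
    (le_abs_self _).trans (by rwa [dist_comm, Subtype.dist_eq, Real.dist_eq] at hst)
  calc edist (f s) (f t)
      ≤ edist (f s) (f (dyadicFloor n s)) + edist (f (dyadicFloor n s)) (f (dyadicFloor n t))
        + edist (f (dyadicFloor n t)) (f t) := edist_triangle4 _ _ _ _
    _ ≤ ∑' m, (δ (n + m + 1) : ℝ≥0∞) + δ n + ∑' m, (δ (n + m + 1) : ℝ≥0∞) := by
        rw [edist_comm (f s)]
        gcongr
        exacts [h.edist_dyadicFloor_le_tsum hf n s, h.edist_dyadicFloor_dyadicFloor_le hle hts,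
          h.edist_dyadicFloor_le_tsum hf n t]
    _ ≤ 2 * (δ n + ∑' m, (δ (n + m + 1) : ℝ≥0∞)) := by
        rw [two_mul, add_comm (∑' m, (δ (n + m + 1) : ℝ≥0∞)) (δ n : ℝ≥0∞)]
        gcongr
        exact le_add_self
    _ = 2 * ∑' m, (δ (n + m) : ℝ≥0∞) := by
        rw [tsum_eq_zero_add' (f := fun m ↦ (δ (n + m) : ℝ≥0∞)) ENNReal.summable]
        simp only [add_zero, add_assoc]

end DyadicIncrementsLE

end Chaining

section Compactness

lemma isCompact_continuousMap_of_equicontinuous {X E : Type*} [TopologicalSpace X] [CompactSpace X]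
    [PseudoMetricSpace E] {A : Set C(X, E)} (hA : IsClosed A) {Q : Set E} (hQ : IsCompact Q)
    (hAQ : ∀ ω ∈ A, ∀ t, ω t ∈ Q) (hequi : Equicontinuous ((↑) : A → X → E)) : IsCompact A := by
  let e := ContinuousMap.isometryEquivBoundedOfCompact X E
  rw [← e.symm.toHomeomorph.isCompact_preimage]
  exact BoundedContinuousFunction.arzela_ascoli₂ Q hQ _ (hA.preimage e.symm.continuous)
    (fun f t hf ↦ hAQ _ hf t) (hequi.comp fun f : (e.symm ⁻¹' A) ↦ (⟨e.symm f.1, f.2⟩ : A))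

variable {E : Type*} {δ : ℕ → ℝ≥0}

lemma isClosed_setOf_dyadicIncrementsLE [PseudoEMetricSpace E] (δ : ℕ → ℝ≥0) :
    IsClosed {ω : C(I, E) | DyadicIncrementsLE ω δ} := by
  simp only [DyadicIncrementsLE, ofPred_forall]
  exact isClosed_iInter fun n ↦ isClosed_iInter fun k ↦ isClosed_iInter fun _ ↦
    isClosed_le ((continuous_eval_const _).edist (continuous_eval_const _)) continuous_const

lemma uniformEquicontinuous_of_dyadicIncrementsLE [PseudoEMetricSpace E] {A : Set C(I, E)}
    (hA : ∀ ω ∈ A, DyadicIncrementsLE ω δ) (hδ : Summable δ) :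
    UniformEquicontinuous ((↑) : A → I → E) := by
  rw [Metric.uniformity_basis_dist_le.uniformEquicontinuous_iff uniformity_basis_edist]
  intro ε hε
  have htail : Tendsto (fun n ↦ 2 * ∑' m, (δ (n + m) : ℝ≥0∞)) atTop (𝓝 0) := by
    simpa only [add_comm, mul_zero] using ENNReal.Tendsto.const_mul
      (ENNReal.tendsto_sum_nat_add _ (ENNReal.tsum_coe_ne_top_iff_summable.2 hδ))
      (.inr ENNReal.ofNat_ne_top)
  obtain ⟨n, hn⟩ := (htail.eventually_lt_const hε).exists
  exact ⟨(2 ^ n)⁻¹, by positivity, fun s t hst ω ↦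
    ((hA ω ω.2).edist_le_two_mul_tsum ω.1.continuous hst).trans_lt hn⟩

theorem isCompact_setOf_dyadicIncrementsLE [PseudoMetricSpace E] [ProperSpace E] {Q : Set E}
    (hQ : IsCompact Q) (hQc : IsClosed Q) (hδ : Summable δ) :
    IsCompact {ω : C(I, E) | ω 0 ∈ Q ∧ DyadicIncrementsLE ω δ} := by
  have hsum : 2 * ∑' n, (δ n : ℝ≥0∞) ≠ ∞ :=
    ENNReal.mul_ne_top ENNReal.ofNat_ne_top (ENNReal.tsum_coe_ne_top_iff_summable.2 hδ)
  refine isCompact_continuousMap_of_equicontinuous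
    ((hQc.preimage (continuous_eval_const 0)).inter (isClosed_setOf_dyadicIncrementsLE δ))
    (hQ.cthickening (r := (2 * ∑' n, (δ n : ℝ≥0∞)).toReal)) (fun ω hω t ↦ ?_)
    (uniformEquicontinuous_of_dyadicIncrementsLE (fun ω hω ↦ hω.2) hδ).equicontinuous
  refine Metric.mem_cthickening_of_edist_le _ _ _ _ hω.1 ?_
  rw [ENNReal.ofReal_toReal hsum]
  have hdist : dist t 0 ≤ (2 ^ 0)⁻¹ := by
    rw [Subtype.dist_eq, Real.dist_eq, Icc.coe_zero, sub_zero, abs_of_nonneg t.2.1, pow_zero,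
      inv_one]
    exact t.2.2
  simpa only [zero_add] using hω.2.edist_le_two_mul_tsum ω.continuous hdist

end Compactness

section Kolmogorov

section UnionBound

variable {T Ω E : Type*} [PseudoEMetricSpace E] {mΩ : MeasurableSpace Ω} {P : Measure Ω}
  {p q : ℝ} {M : ℝ≥0}

lemma measure_lt_edist_le_of_isKolmogorovProcess [PseudoEMetricSpace T] {X : T → Ω → E}
    (hX : IsKolmogorovProcess X P p q M) {s t : T} {r δ : ℝ≥0} (hst : edist s t ≤ r)
    (hδ : δ ≠ 0) :
    P {ω | δ < edist (X s ω) (X t ω)} ≤ (M * r ^ q / δ ^ p : ℝ≥0) := by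
  have hδp : δ ^ p ≠ 0 := (NNReal.rpow_pos hδ.bot_lt).ne'
  calc P {ω | δ < edist (X s ω) (X t ω)}
      ≤ P {ω | ((δ ^ p : ℝ≥0) : ℝ≥0∞) ≤ edist (X s ω) (X t ω) ^ p} := by
        refine measure_mono fun ω hω ↦ ?_
        rw [mem_ofPred_eq, ENNReal.coe_rpow_of_nonneg _ hX.p_pos.le]
        exact ENNReal.rpow_le_rpow (le_of_lt hω) hX.p_pos.le
    _ ≤ (∫⁻ ω, edist (X s ω) (X t ω) ^ p ∂P) / (δ ^ p : ℝ≥0) :=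
        meas_ge_le_lintegral_div (hX.measurable_edist.pow_const p).aemeasurable
          (ENNReal.coe_ne_zero.2 hδp) ENNReal.coe_ne_top
    _ ≤ M * (r : ℝ≥0∞) ^ q / (δ ^ p : ℝ≥0) := by
        gcongr
        exact (hX.kolmogorovCondition s t).trans (by gcongr; exact hX.q_pos.le)
    _ = (M * r ^ q / δ ^ p : ℝ≥0) := by
        rw [ENNReal.coe_div hδp, ENNReal.coe_mul, ENNReal.coe_rpow_of_nonneg _ hX.q_pos.le]

theorem measure_not_dyadicIncrementsLE_le {X : I → Ω → E} (hX : IsKolmogorovProcess X P p q M)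
    {δ : ℕ → ℝ≥0} (hδ : ∀ n, δ n ≠ 0) :
    P {ω | ¬ DyadicIncrementsLE (X · ω) δ}
      ≤ ∑' n, ((2 ^ n * (M * (2 ^ n)⁻¹ ^ q / δ n ^ p) : ℝ≥0) : ℝ≥0∞) := by
  have hunion : {ω | ¬ DyadicIncrementsLE (X · ω) δ} = ⋃ n, ⋃ k ∈ Finset.range (2 ^ n),
      {ω | δ n < edist (X (dyadicPt n k) ω) (X (dyadicPt n (k + 1)) ω)} := by
    ext ω
    simp only [DyadicIncrementsLE, not_forall, not_le, exists_prop, mem_ofPred_eq, mem_iUnion,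
      Finset.mem_range]
  rw [hunion]
  refine (measure_iUnion_le _).trans (ENNReal.tsum_le_tsum fun n ↦ ?_)
  refine (measure_biUnion_finset_le _ _).trans ((Finset.sum_le_sum fun k _ ↦
    measure_lt_edist_le_of_isKolmogorovProcess hX (edist_dyadicPt_succ_le n k) (hδ n)).trans_eq ?_)
  rw [Finset.sum_const, Finset.card_range, nsmul_eq_mul, ENNReal.coe_mul, Nat.cast_pow]
  push_cast
  rfl

end UnionBound

lemma exists_summable_tsum_two_pow_mul_le {p q : ℝ} (hp : 0 < p) (hq : 1 < q) (M : ℝ≥0) {ε : ℝ≥0}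
    (hε : 0 < ε) :
    ∃ δ : ℕ → ℝ≥0, (∀ n, δ n ≠ 0) ∧ Summable δ ∧
      ∑' n, ((2 ^ n * (M * (2 ^ n)⁻¹ ^ q / δ n ^ p) : ℝ≥0) : ℝ≥0∞) ≤ ε := by
  -- With `δ n ^ p = K * r ^ n` the `n`-th term is `M / K * (2 * 2⁻¹ ^ q / r) ^ n`; this `r` turns
  -- `2 * 2⁻¹ ^ q` into `r * r`, so that both series are geometric.
  let r : ℝ≥0 := 2 ^ ((1 - q) / 2)
  have hr : 0 < r := NNReal.rpow_pos two_pos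
  have hr1 : r < 1 := NNReal.rpow_lt_one_of_one_lt_of_neg one_lt_two (by linarith)
  have hr2 : (2 : ℝ≥0) * 2⁻¹ ^ q = r * r := by
    rw [← NNReal.rpow_add two_ne_zero, add_halves, NNReal.rpow_sub two_ne_zero, NNReal.rpow_one,
      NNReal.inv_rpow, div_eq_mul_inv]
  let K : ℝ≥0 := (M + 1) / (ε * (1 - r))
  have hK : 0 < K := by have := tsub_pos_of_lt hr1; positivity
  have hterm (n : ℕ) : 2 ^ n * (M * (2 ^ n)⁻¹ ^ q / ((K * r ^ n) ^ p⁻¹) ^ p) = M / K * r ^ n :=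
    calc 2 ^ n * (M * (2 ^ n)⁻¹ ^ q / ((K * r ^ n) ^ p⁻¹) ^ p)
        = M / K * ((2 * 2⁻¹ ^ q) ^ n / r ^ n) := by
          rw [NNReal.rpow_inv_rpow hp.ne', ← inv_pow, ← NNReal.rpow_natCast_mul,
            mul_comm (n : ℝ) q, NNReal.rpow_mul_natCast, mul_pow]
          field_simp
      _ = M / K * r ^ n := by rw [hr2, mul_pow, mul_div_cancel_right₀ _ (pow_pos hr n).ne']
  refine ⟨fun n ↦ (K * r ^ n) ^ p⁻¹, fun n ↦ (NNReal.rpow_pos (by positivity)).ne', ?_, ?_⟩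
  · have hsum := NNReal.summable_geometric (NNReal.rpow_lt_one hr1 (inv_pos.2 hp))
    convert! hsum.mul_left (K ^ p⁻¹) using 2 with n
    rw [NNReal.mul_rpow, ← NNReal.rpow_natCast_mul, mul_comm (n : ℝ), NNReal.rpow_mul_natCast]
  · simp_rw [hterm]
    rw [ENNReal.tsum_coe_eq ((NNReal.hasSum_geometric hr1).mul_left (M / K)), ENNReal.coe_le_coe]
    have := tsub_pos_of_lt hr1
    calc M / K * (1 - r)⁻¹ = ε * (M / (M + 1)) := by
          simp only [K]
          field_simp
      _ ≤ ε := mul_le_of_le_one_right hε.le (div_le_one_of_le₀ le_self_add zero_le)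

/-- Kolmogorov's tightness criterion. -/
theorem isTightMeasureSet_range_map_of_isKolmogorovProcess {ι E : Type*} {Ω : ι → Type*}
    [∀ i, MeasurableSpace (Ω i)] [MetricSpace E] [ProperSpace E] [MeasurableSpace E]
    [BorelSpace E] [MeasurableSpace C(I, E)] [OpensMeasurableSpace C(I, E)]
    {P : ∀ i, Measure (Ω i)} {X : ∀ i, Ω i → C(I, E)} (hX : ∀ i, Measurable (X i)) {p q : ℝ}
    {M : ℝ≥0} (hK : ∀ i, IsKolmogorovProcess (fun t ω ↦ X i ω t) (P i) p q M) (hq : 1 < q)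
    (h0 : IsTightMeasureSet (range fun i ↦ (P i).map fun ω ↦ X i ω 0)) :
    IsTightMeasureSet (range fun i ↦ (P i).map (X i)) := by
  rw [isTightMeasureSet_iff_exists_isCompact_measure_compl_le] at h0 ⊢
  intro ε hε
  rcases isEmpty_or_nonempty ι with _ | ⟨⟨i₀⟩⟩
  · exact ⟨∅, isCompact_empty, forall_mem_range.2 isEmptyElim⟩
  obtain ⟨Q, hQ, hPQ⟩ := h0 (ε / 2) (ENNReal.half_pos hε.ne')
  obtain ⟨ε', hε'0, hε'⟩ := ENNReal.lt_iff_exists_nnreal_btwn.1 (ENNReal.half_pos hε.ne')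
  obtain ⟨δ, hδ0, hδ, hδε⟩ :=
    exists_summable_tsum_two_pow_mul_le (hK i₀).p_pos hq M (ENNReal.coe_pos.1 hε'0)
  have hcomp := isCompact_setOf_dyadicIncrementsLE hQ hQ.isClosed hδ
  refine ⟨_, hcomp, forall_mem_range.2 fun i ↦ ?_⟩
  have hQi : P i {ω | X i ω 0 ∉ Q} ≤ ε / 2 := by
    simpa only [Measure.map_apply ((hK i).measurable 0) hQ.isClosed.measurableSet.compl] using!
      hPQ _ ⟨i, rfl⟩
  have hδi : P i {ω | ¬ DyadicIncrementsLE (X i ω) δ} ≤ ε / 2 :=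
    ((measure_not_dyadicIncrementsLE_le (hK i) hδ0).trans hδε).trans hε'.le
  rw [Measure.map_apply (hX i) hcomp.isClosed.measurableSet.compl]
  calc P i (X i ⁻¹' {ω | ω 0 ∈ Q ∧ DyadicIncrementsLE ω δ}ᶜ)
      ≤ P i ({ω | X i ω 0 ∉ Q} ∪ {ω | ¬ DyadicIncrementsLE (X i ω) δ}) :=
        measure_mono fun ω hω ↦ not_and_or.1 hω
    _ ≤ ε / 2 + ε / 2 := (measure_union_le _ _).trans (add_le_add hQi hδi)
    _ = ε := ENNReal.add_halves ε

end Kolmogorov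

section Tightness

variable {X Y : Type*} [TopologicalSpace X] [MeasurableSpace X] {S : Set (Measure X)}

lemma isTightMeasureSet_of_measure_compl_eq_zero {K : Set X} (hK : IsCompact K)
    (hS : ∀ μ ∈ S, μ Kᶜ = 0) : IsTightMeasureSet S :=
  isTightMeasureSet_iff_exists_isCompact_measure_compl_le.2 fun _ _ ↦
    ⟨K, hK, fun μ hμ ↦ (hS μ hμ).trans_le zero_le⟩

lemma isTightMeasureSet_of_isTightMeasureSet_map [TopologicalSpace Y] [T2Space Y]
    [MeasurableSpace Y] [OpensMeasurableSpace Y] {f : X → Y} (hf : IsClosedEmbedding f)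
    (hfm : Measurable f) (hS : IsTightMeasureSet (Measure.map f '' S)) : IsTightMeasureSet S := by
  rw [isTightMeasureSet_iff_exists_isCompact_measure_compl_le] at hS ⊢
  intro ε hε
  obtain ⟨K, hK, hSK⟩ := hS ε hε
  refine ⟨f ⁻¹' K, hf.isCompact_preimage hK, fun μ hμ ↦ ?_⟩
  rw [← preimage_compl, ← Measure.map_apply hfm hK.isClosed.measurableSet.compl]
  exact hSK _ (mem_image_of_mem _ hμ)

lemma exists_isCompact_forall_measure_compl_lt (hS : IsTightMeasureSet S) {ε : ℝ≥0∞} (hε : 0 < ε) :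
    ∃ K, IsCompact K ∧ ∀ μ ∈ S, μ Kᶜ < ε := by
  obtain ⟨ε', hε'0, hε'⟩ := exists_between hε
  obtain ⟨K, hK, hSK⟩ := isTightMeasureSet_iff_exists_isCompact_measure_compl_le.1 hS ε' hε'0
  exact ⟨K, hK, fun μ hμ ↦ (hSK μ hμ).trans_lt hε'⟩

end Tightness

section SymmetricSums

variable {E ι : Type*} [Fintype ι]

lemma expect_fin_succ {M : Type*} [AddCommMonoid M] [Module ℚ≥0 M] {n : ℕ}
    (f : (Fin (n + 1) → ι) → M) :
    𝔼 s, f s = 𝔼 s : Fin n → ι, 𝔼 p : ι, f (Fin.cons p s) := by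
  rw [← Fintype.expect_equiv (Fin.consEquiv fun _ ↦ ι) _ f fun _ ↦ rfl, ← Finset.univ_product_univ,
    Finset.expect_product, Finset.expect_comm]
  rfl

variable [Nonempty ι]

lemma expect_le_of_add_neg_le [Neg E] {v : ι → E} {τ : Equiv.Perm ι} (hτ : ∀ p, v (τ p) = -v p)
    {f : E → ℝ} {c : ℝ} (h : ∀ p, f (v p) + f (-v p) ≤ 2 * c) : 𝔼 p, f (v p) ≤ c := by
  have hneg : 𝔼 p, f (-v p) = 𝔼 p, f (v p) :=
    Fintype.expect_equiv τ _ _ fun p ↦ by rw [hτ]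
  have hsum : 𝔼 p, (f (v p) + f (-v p)) ≤ 2 * c :=
    Finset.expect_le Finset.univ_nonempty fun p _ ↦ h p
  rw [Finset.expect_add_distrib, hneg] at hsum
  linarith

variable [NormedAddCommGroup E] [InnerProductSpace ℝ E]

lemma norm_add_pow_four_add_norm_sub_pow_four_le (u v : E) :
    ‖u + v‖ ^ 4 + ‖u - v‖ ^ 4 ≤ 2 * (‖u‖ ^ 4 + 6 * ‖v‖ ^ 2 * ‖u‖ ^ 2 + ‖v‖ ^ 4) := by
  have hinner : ⟪u, v⟫ ^ 2 ≤ (‖u‖ * ‖v‖) ^ 2 :=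
    sq_le_sq' (neg_le_of_abs_le (abs_real_inner_le_norm u v)) (real_inner_le_norm u v)
  calc ‖u + v‖ ^ 4 + ‖u - v‖ ^ 4
      = (‖u + v‖ ^ 2) ^ 2 + (‖u - v‖ ^ 2) ^ 2 := by ring
    _ = 2 * (‖u‖ ^ 2 + ‖v‖ ^ 2) ^ 2 + 8 * ⟪u, v⟫ ^ 2 := by
        rw [norm_add_sq_real, norm_sub_sq_real]
        ring
    _ ≤ 2 * (‖u‖ ^ 2 + ‖v‖ ^ 2) ^ 2 + 8 * (‖u‖ * ‖v‖) ^ 2 := by gcongr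
    _ = 2 * (‖u‖ ^ 4 + 6 * ‖v‖ ^ 2 * ‖u‖ ^ 2 + ‖v‖ ^ 4) := by ring

variable {τ : Equiv.Perm ι}

lemma expect_norm_add_sq_le {v : ι → E} (hτ : ∀ p, v (τ p) = -v p) {b : ℝ} (hb : ∀ p, ‖v p‖ ≤ b)
    (u : E) : 𝔼 p, ‖u + v p‖ ^ 2 ≤ ‖u‖ ^ 2 + b ^ 2 :=
  expect_le_of_add_neg_le (f := fun w ↦ ‖u + w‖ ^ 2) hτ fun p ↦ by
    calc ‖u + v p‖ ^ 2 + ‖u + -v p‖ ^ 2 = 2 * (‖u‖ ^ 2 + ‖v p‖ ^ 2) := by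
          rw [← sub_eq_add_neg, norm_add_sq_real, norm_sub_sq_real]
          ring
      _ ≤ 2 * (‖u‖ ^ 2 + b ^ 2) := by
          gcongr
          exact hb p

lemma expect_norm_add_pow_four_le {v : ι → E} (hτ : ∀ p, v (τ p) = -v p) {b : ℝ}
    (hb : ∀ p, ‖v p‖ ≤ b) (u : E) :
    𝔼 p, ‖u + v p‖ ^ 4 ≤ ‖u‖ ^ 4 + 6 * b ^ 2 * ‖u‖ ^ 2 + b ^ 4 :=
  expect_le_of_add_neg_le (f := fun w ↦ ‖u + w‖ ^ 4) hτ fun p ↦ by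
    rw [← sub_eq_add_neg]
    refine (norm_add_pow_four_add_norm_sub_pow_four_le u (v p)).trans ?_
    gcongr <;> exact hb p

lemma expect_norm_sum_sq_le {n : ℕ} {v : Fin n → ι → E} (hτ : ∀ i p, v i (τ p) = -v i p)
    {b : Fin n → ℝ} (hb : ∀ i p, ‖v i p‖ ≤ b i) :
    𝔼 s : Fin n → ι, ‖∑ i, v i (s i)‖ ^ 2 ≤ ∑ i, b i ^ 2 := by
  induction n with
  | zero => simp
  | succ n ih =>
    calc 𝔼 s : Fin (n + 1) → ι, ‖∑ i, v i (s i)‖ ^ 2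
        = 𝔼 s : Fin n → ι, 𝔼 p, ‖∑ i, v i.succ (s i) + v 0 p‖ ^ 2 := by
          simp only [expect_fin_succ, Fin.sum_univ_succ, Fin.cons_zero, Fin.cons_succ, add_comm]
      _ ≤ 𝔼 s : Fin n → ι, (‖∑ i, v i.succ (s i)‖ ^ 2 + b 0 ^ 2) :=
          Finset.expect_le_expect fun s _ ↦ expect_norm_add_sq_le (hτ 0) (hb 0) _
      _ = 𝔼 s : Fin n → ι, ‖∑ i, v i.succ (s i)‖ ^ 2 + b 0 ^ 2 := by
          rw [Finset.expect_add_distrib, Fintype.expect_const]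
      _ ≤ ∑ i : Fin n, b i.succ ^ 2 + b 0 ^ 2 := by
          gcongr
          exact ih (fun i ↦ hτ i.succ) fun i ↦ hb i.succ
      _ = ∑ i, b i ^ 2 := by rw [Fin.sum_univ_succ, add_comm]

theorem expect_norm_sum_pow_four_le {n : ℕ} {v : Fin n → ι → E} (hτ : ∀ i p, v i (τ p) = -v i p)
    {b : Fin n → ℝ} (hb : ∀ i p, ‖v i p‖ ≤ b i) :
    𝔼 s : Fin n → ι, ‖∑ i, v i (s i)‖ ^ 4 ≤ 3 * (∑ i, b i ^ 2) ^ 2 := by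
  induction n with
  | zero => simp
  | succ n ih =>
    have hsq := expect_norm_sum_sq_le (fun i ↦ hτ i.succ) fun i ↦ hb i.succ
    have hfour := ih (fun i ↦ hτ i.succ) fun i ↦ hb i.succ
    calc 𝔼 s : Fin (n + 1) → ι, ‖∑ i, v i (s i)‖ ^ 4
        = 𝔼 s : Fin n → ι, 𝔼 p, ‖∑ i, v i.succ (s i) + v 0 p‖ ^ 4 := by
          simp only [expect_fin_succ, Fin.sum_univ_succ, Fin.cons_zero, Fin.cons_succ, add_comm]
      _ ≤ 𝔼 s : Fin n → ι, (‖∑ i, v i.succ (s i)‖ ^ 4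
            + 6 * b 0 ^ 2 * ‖∑ i, v i.succ (s i)‖ ^ 2 + b 0 ^ 4) :=
          Finset.expect_le_expect fun s _ ↦ expect_norm_add_pow_four_le (hτ 0) (hb 0) _
      _ = 𝔼 s : Fin n → ι, ‖∑ i, v i.succ (s i)‖ ^ 4
            + 6 * b 0 ^ 2 * 𝔼 s : Fin n → ι, ‖∑ i, v i.succ (s i)‖ ^ 2 + b 0 ^ 4 := by
          rw [Finset.expect_add_distrib, Finset.expect_add_distrib, Fintype.expect_const,
            Finset.mul_expect]
      _ ≤ 3 * (∑ i : Fin n, b i.succ ^ 2) ^ 2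
            + 6 * b 0 ^ 2 * ∑ i : Fin n, b i.succ ^ 2 + 3 * b 0 ^ 4 := by
          gcongr
          linarith [show 0 ≤ b 0 ^ 4 by positivity]
      _ = 3 * (∑ i, b i ^ 2) ^ 2 := by
          rw [Fin.sum_univ_succ]
          ring

end SymmetricSums

section Clamp

lemma monotone_clamp01 : Monotone clamp01 :=
  fun _ _ h ↦ min_le_min_left _ (max_le_max_left _ h)

lemma clamp01_mem_Icc (r : ℝ) : clamp01 r ∈ Icc 0 1 :=
  ⟨le_min zero_le_one (le_max_left _ _), min_le_left _ _⟩

lemma clamp01_of_mem_Icc {r : ℝ} (hr : r ∈ Icc 0 1) : clamp01 r = r := by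
  rw [clamp01, max_eq_right hr.1, min_eq_right hr.2]

lemma sum_clamp01_sub (N : ℕ) {u : ℝ} (hu : 0 ≤ u) :
    ∑ i : Fin N, clamp01 (u - (i : ℕ)) = min (N : ℝ) u := by
  rw [Fin.sum_univ_eq_sum_range fun i : ℕ ↦ clamp01 (u - i)]
  induction N with
  | zero => rw [Finset.sum_range_zero, Nat.cast_zero, min_eq_left hu]
  | succ N ih =>
    rw [Finset.sum_range_succ, ih, Nat.cast_succ]
    rcases le_total u N with h | h
    · rw [clamp01_of_nonpos (by linarith), min_eq_right h, min_eq_right (by linarith), add_zero]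
    rcases le_total (N + 1 : ℝ) u with h' | h'
    · rw [clamp01_of_one_le (by linarith), min_eq_left h, min_eq_left h']
    · rw [clamp01_of_mem_Icc ⟨by linarith, by linarith⟩, min_eq_left h, min_eq_right h',
        add_sub_cancel]

lemma sum_sq_clamp01_sub_clamp01_le (N : ℕ) (s t : I) :
    ∑ i : Fin N, (clamp01 (N * s - (i : ℕ)) - clamp01 (N * t - (i : ℕ))) ^ 2
      ≤ N * dist s t := by
  wlog hst : t ≤ s generalizing s t
  · simpa only [sub_sq_comm, dist_comm] using! this t s (le_of_not_ge hst)
  have hts : (N * t : ℝ) ≤ N * s := by gcongr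
  have hsum (r : I) : ∑ i : Fin N, clamp01 (N * r - (i : ℕ)) = N * r := by
    rw [sum_clamp01_sub N (mul_nonneg N.cast_nonneg r.2.1),
      min_eq_right (mul_le_of_le_one_right N.cast_nonneg r.2.2)]
  calc ∑ i : Fin N, (clamp01 (N * s - (i : ℕ)) - clamp01 (N * t - (i : ℕ))) ^ 2
      ≤ ∑ i : Fin N, (clamp01 (N * s - (i : ℕ)) - clamp01 (N * t - (i : ℕ))) := by
        gcongr with i
        refine pow_le_of_le_one (sub_nonneg.2 (monotone_clamp01 (sub_le_sub_right hts _))) ?_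
          two_ne_zero
        linarith [(clamp01_mem_Icc (N * s - (i : ℕ))).2, (clamp01_mem_Icc (N * t - (i : ℕ))).1]
    _ = N * dist s t := by
        rw [Finset.sum_sub_distrib, hsum, hsum, Subtype.dist_eq, Real.dist_eq,
          abs_of_nonneg (sub_nonneg.2 (Subtype.coe_le_coe.2 hst)), mul_sub]

end Clamp

section LatticePaths

variable {d : ℕ}

lemma dist_pwLinE (x : Ed d) {N : ℕ} (v : Fin N → Ed d) (s t : I) :
    dist (pwLinE x N v s) (pwLinE x N v t)
      = ‖∑ i : Fin N, (clamp01 (N * s - (i : ℕ)) - clamp01 (N * t - (i : ℕ))) • v i‖ := by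
  simp only [pwLinE, ContinuousMap.coe_mk, dist_eq_norm, add_sub_add_left_eq_sub,
    ← Finset.sum_sub_distrib, sub_smul]

theorem expect_dist_pwLinE_pow_four_le {ι : Type*} [Fintype ι] [Nonempty ι] {τ : Equiv.Perm ι}
    (x : Ed d) {N : ℕ} {v : Fin N → ι → Ed d} (hτ : ∀ i p, v i (τ p) = -v i p) {b : ℝ}
    (hb : ∀ i p, ‖v i p‖ ≤ b) (s t : I) :
    𝔼 w : Fin N → ι, dist (pwLinE x N (fun i ↦ v i (w i)) s) (pwLinE x N (fun i ↦ v i (w i)) t) ^ 4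
      ≤ 3 * (b ^ 2 * N * dist s t) ^ 2 := by
  set c : Fin N → ℝ := fun i ↦ clamp01 (N * s - (i : ℕ)) - clamp01 (N * t - (i : ℕ))
  have hcb (i : Fin N) (p : ι) : ‖c i • v i p‖ ≤ |c i| * b := by
    rw [norm_smul, Real.norm_eq_abs]
    gcongr
    exact hb i p
  simp only [dist_pwLinE]
  calc 𝔼 w : Fin N → ι, ‖∑ i, c i • v i (w i)‖ ^ 4
      ≤ 3 * (∑ i, (|c i| * b) ^ 2) ^ 2 :=
        expect_norm_sum_pow_four_le (v := fun i p ↦ c i • v i p) (τ := τ)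
          (fun i p ↦ by rw [hτ, smul_neg]) hcb
    _ = 3 * (b ^ 2 * ∑ i, c i ^ 2) ^ 2 := by
        rw [Finset.mul_sum]
        simp_rw [mul_pow |_| b, sq_abs, mul_comm (b ^ 2)]
    _ ≤ 3 * (b ^ 2 * N * dist s t) ^ 2 := by
        rw [mul_assoc (b ^ 2)]
        gcongr
        exact sum_sq_clamp01_sub_clamp01_le N s t

lemma norm_stepVec (a : ℝ) (p : Fin d × Bool) : ‖stepVec a p‖ = |a| := by
  rw [stepVec, norm_smul, PiLp.norm_single, norm_one, mul_one, Real.norm_eq_abs]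
  split_ifs
  exacts [rfl, abs_neg a]

lemma stepVec_not (a : ℝ) (j : Fin d) (b : Bool) : stepVec a (j, !b) = -stepVec a (j, b) := by
  cases b <;> simp [stepVec]

lemma lintegral_VxaN_ofReal (hd : 1 ≤ d) (x : Ed d) (a : ℝ) (N : ℕ) {g : Omega1 x → ℝ}
    (hg : 0 ≤ g) :
    ∫⁻ ω, ENNReal.ofReal (g ω) ∂VxaN x a N
      = ENNReal.ofReal (𝔼 w : Fin N → Fin d × Bool, g (pwLin1 x N fun i ↦ stepVec a (w i))) := by
  have hcard : (Fintype.card (Fin N → Fin d × Bool) : ℝ) = (2 * d : ℕ) ^ N := by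
    simp [mul_comm]
  have hpos : (0 : ℝ) < (2 * d : ℕ) ^ N := by positivity
  rw [VxaN, lintegral_sum_measure, tsum_fintype, Fintype.expect_eq_sum_div_card, hcard,
    ENNReal.ofReal_div_of_pos hpos, ENNReal.ofReal_sum_of_nonneg fun w _ ↦ hg _,
    ENNReal.ofReal_pow (Nat.cast_nonneg _), ENNReal.ofReal_natCast, ENNReal.div_eq_inv_mul,
    Finset.mul_sum]
  simp only [lintegral_smul_measure, lintegral_dirac, smul_eq_mul]

lemma lintegral_dist_pow_four_VxaN_le (hd : 1 ≤ d) (x : Ed d) (a : ℝ) (N : ℕ) (s t : I) :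
    ∫⁻ ω, ENNReal.ofReal (dist (ω.1 s) (ω.1 t) ^ 4) ∂VxaN x a N
      ≤ ENNReal.ofReal (3 * (a ^ 2 * N * dist s t) ^ 2) := by
  have : NeZero d := ⟨by lia⟩
  rw [lintegral_VxaN_ofReal hd x a N fun _ ↦ by positivity, ← sq_abs a]
  exact ENNReal.ofReal_le_ofReal <|
    expect_dist_pwLinE_pow_four_le (τ := (Equiv.refl _).prodCongr Equiv.boolNot) x
      (fun _ p ↦ stepVec_not a p.1 p.2) (fun _ p ↦ (norm_stepVec a p).le) s t

lemma lintegral_Vxa (x : Ed d) (m a : ℝ) (f : Omega1 x → ℝ≥0∞) :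
    ∫⁻ ω, f ω ∂Vxa x m a = ENNReal.ofReal (1 - exp (-m ^ 2 * a ^ 2 / (2 * d))) *
      ∑' N : ℕ, ENNReal.ofReal (exp (-m ^ 2 * a ^ 2 / (2 * d)) ^ N) * ∫⁻ ω, f ω ∂VxaN x a N := by
  have hexp (N : ℕ) :
      exp (-m ^ 2 * a ^ 2 * N / (2 * d)) = exp (-m ^ 2 * a ^ 2 / (2 * d)) ^ N := by
    rw [← exp_nat_mul]
    congr 1
    ring
  simp only [Vxa, lintegral_smul_measure, lintegral_sum_measure, smul_eq_mul, hexp]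

end LatticePaths

section Geometric

lemma natCast_sq_le_two_mul_choose (N : ℕ) : (N : ℝ) ^ 2 ≤ 2 * ((N + 1).choose 2 : ℝ) := by
  rw [Nat.cast_choose_two, Nat.cast_succ]
  linarith [N.cast_nonneg (α := ℝ)]

lemma hasSum_choose_two_mul_geometric {q : ℝ} (hq : |q| < 1) :
    HasSum (fun N : ℕ ↦ ((N + 1).choose 2 : ℝ) * q ^ N) (q / (1 - q) ^ 3) := by
  have hshift := (hasSum_choose_mul_geometric_of_norm_lt_one 2 hq).mul_left q
  refine (hasSum_nat_add_iff' 1).1 ?_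
  convert! hshift using 1
  · ext N
    ring
  · simp [div_eq_mul_inv]

lemma ofReal_one_sub_mul_tsum_geometric_sq_le {q C : ℝ} (hq0 : 0 ≤ q) (hq1 : q < 1) (hC : 0 ≤ C) :
    ENNReal.ofReal (1 - q) * ∑' N : ℕ, ENNReal.ofReal (q ^ N) * ENNReal.ofReal (C * N ^ 2)
      ≤ ENNReal.ofReal (2 * C * (q / (1 - q) ^ 2)) := by
  have hpos : 0 < 1 - q := sub_pos.2 hq1
  have hsum := (hasSum_choose_two_mul_geometric ((abs_of_nonneg hq0).trans_lt hq1)).mul_left (2 * C)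
  calc ENNReal.ofReal (1 - q) * ∑' N : ℕ, ENNReal.ofReal (q ^ N) * ENNReal.ofReal (C * N ^ 2)
      ≤ ENNReal.ofReal (1 - q) *
          ∑' N : ℕ, ENNReal.ofReal (2 * C * (((N + 1).choose 2 : ℝ) * q ^ N)) := by
        gcongr with N
        rw [← ENNReal.ofReal_mul (by positivity)]
        refine ENNReal.ofReal_le_ofReal ?_
        calc q ^ N * (C * N ^ 2) ≤ q ^ N * (C * (2 * ((N + 1).choose 2 : ℝ))) := by
              gcongr
              exact natCast_sq_le_two_mul_choose N
          _ = 2 * C * (((N + 1).choose 2 : ℝ) * q ^ N) := by ring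
    _ = ENNReal.ofReal (2 * C * (q / (1 - q) ^ 2)) := by
        rw [← ENNReal.ofReal_tsum_of_nonneg (fun _ ↦ by positivity) hsum.summable, hsum.tsum_eq,
          ← ENNReal.ofReal_mul hpos.le]
        congr 1
        field_simp

lemma sq_mul_exp_neg_le (u : ℝ) : u ^ 2 * exp (-u) ≤ (1 - exp (-u)) ^ 2 := by
  have hsinh : |u / 2| ≤ |sinh (u / 2)| := by
    rw [abs_sinh]
    exact self_le_sinh_iff.2 (abs_nonneg _)
  have hexp : exp (-(u / 2)) ^ 2 = exp (-u) := by
    rw [← exp_nat_mul]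
    congr 1
    push_cast
    ring
  have hone : exp (u / 2) * exp (-(u / 2)) = 1 := by
    rw [← exp_add, add_neg_cancel, exp_zero]
  calc u ^ 2 * exp (-u) = |u / 2| ^ 2 * (4 * exp (-u)) := by
        rw [sq_abs]
        ring
    _ ≤ |sinh (u / 2)| ^ 2 * (4 * exp (-u)) := by gcongr
    _ = ((exp (u / 2) - exp (-(u / 2))) * exp (-(u / 2))) ^ 2 := by
        rw [sq_abs, sinh_eq, ← hexp]
        ring
    _ = (1 - exp (-u)) ^ 2 := by rw [sub_mul, hone, ← sq, hexp]

end Geometric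

section Vxa

lemma edist_rpow_natCast {X : Type*} [PseudoMetricSpace X] (x y : X) (n : ℕ) :
    edist x y ^ (n : ℝ) = ENNReal.ofReal (dist x y ^ n) := by
  rw [ENNReal.rpow_natCast, edist_dist, ENNReal.ofReal_pow dist_nonneg]

variable {d : ℕ}

lemma lintegral_dist_pow_four_Vxa_le (hd : 1 ≤ d) (x : Ed d) {m a : ℝ} (hm : m ≠ 0) (ha : 0 < a)
    (s t : I) :
    ∫⁻ ω, ENNReal.ofReal (dist (ω.1 s) (ω.1 t) ^ 4) ∂Vxa x m a
      ≤ ENNReal.ofReal (24 * d ^ 2 / m ^ 4 * dist s t ^ 2) := by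
  set u : ℝ := m ^ 2 * a ^ 2 / (2 * d) with hu
  have hu0 : 0 < u := by positivity
  have hq1 : exp (-u) < 1 := exp_lt_one_iff.2 (neg_neg_of_pos hu0)
  have hratio : exp (-u) / (1 - exp (-u)) ^ 2 ≤ 1 / u ^ 2 := by
    rw [div_le_div_iff₀ (pow_pos (sub_pos.2 hq1) 2) (by positivity), mul_comm, one_mul]
    exact sq_mul_exp_neg_le u
  rw [lintegral_Vxa, neg_mul, neg_div, ← hu]
  calc ENNReal.ofReal (1 - exp (-u)) * ∑' N : ℕ, ENNReal.ofReal (exp (-u) ^ N) *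
        ∫⁻ ω, ENNReal.ofReal (dist (ω.1 s) (ω.1 t) ^ 4) ∂VxaN x a N
      ≤ ENNReal.ofReal (1 - exp (-u)) * ∑' N : ℕ, ENNReal.ofReal (exp (-u) ^ N) *
          ENNReal.ofReal (3 * (a ^ 2 * dist s t) ^ 2 * N ^ 2) := by
        gcongr with N
        refine (lintegral_dist_pow_four_VxaN_le hd x a N s t).trans_eq ?_
        congr 1
        ring
    _ ≤ ENNReal.ofReal (2 * (3 * (a ^ 2 * dist s t) ^ 2) * (exp (-u) / (1 - exp (-u)) ^ 2)) :=
        ofReal_one_sub_mul_tsum_geometric_sq_le (exp_nonneg _) hq1 (by positivity)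
    _ ≤ ENNReal.ofReal (2 * (3 * (a ^ 2 * dist s t) ^ 2) * (1 / u ^ 2)) := by gcongr
    _ = ENNReal.ofReal (24 * d ^ 2 / m ^ 4 * dist s t ^ 2) := by
        congr 1
        rw [hu]
        field_simp
        ring

theorem isKolmogorovProcess_Vxa (hd : 1 ≤ d) (x : Ed d) {m a : ℝ} (hm : m ≠ 0) (ha : 0 < a) :
    IsKolmogorovProcess (fun t (ω : Omega1 x) ↦ ω.1 t) (Vxa x m a) 4 2
      (24 * d ^ 2 / m ^ 4).toNNReal := by
  refine .mk_of_secondCountableTopology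
    (fun t ↦ ((continuous_eval_const t).comp continuous_subtype_val).measurable)
    (fun s t ↦ ?_) four_pos two_pos
  have hpow := edist_rpow_natCast s t 2
  simp only [Nat.cast_ofNat] at hpow
  rw [hpow, ENNReal.coe_nnreal_eq, Real.coe_toNNReal _ (by positivity),
    ← ENNReal.ofReal_mul (by positivity)]
  convert! lintegral_dist_pow_four_Vxa_le hd x hm ha s t using 3 with ω
  exact edist_rpow_natCast _ _ 4

end Vxa

theorem Vxa_tight_general (d : ℕ) (hd : 1 ≤ d) (m : ℝ) (hm : m ≠ 0) (x : Ed d) :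
    IsTightMeasureSet (Vxa x m '' Ioi 0) := by
  have hemb : IsClosedEmbedding (Subtype.val : Omega1 x → PathSp d) :=
    (isClosed_eq (continuous_eval_const 0) continuous_const).isClosedEmbedding_subtypeVal
  refine isTightMeasureSet_of_isTightMeasureSet_map hemb measurable_subtype_coe ?_
  rw [image_image, image_eq_range]
  refine isTightMeasureSet_range_map_of_isKolmogorovProcess (fun _ ↦ measurable_subtype_coe)
    (fun a : Ioi (0 : ℝ) ↦ isKolmogorovProcess_Vxa hd x hm a.2) one_lt_two ?_
  refine isTightMeasureSet_of_measure_compl_eq_zero (isCompact_singleton (x := x))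
    (forall_mem_range.2 fun a ↦ ?_)
  have hstart : (fun ω : Omega1 x ↦ ω.1 0) = fun _ ↦ x := funext Subtype.prop
  simp [hstart, Measure.map_const]

/-- **Lemma 4.2**: the family `{V'_{x,a} : 0 < a < 1}` of probability measures on
`Ω(x)` is tight. -/
theorem Vxa_tight (d : ℕ) (hd : 1 ≤ d) (m : ℝ) (hm : 0 < m) (x : Ed d) :
    ∀ η : ℝ, 0 < η → ∃ K : Set (Omega1 x), IsCompact K ∧
      ∀ a : ℝ, 0 < a → a < 1 → Vxa x m a Kᶜ < ENNReal.ofReal η := by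
  intro η hη
  obtain ⟨K, hK, hVK⟩ := exists_isCompact_forall_measure_compl_lt
    (Vxa_tight_general d hd m hm.ne' x) (ENNReal.ofReal_pos.2 hη)
  exact ⟨K, hK, fun a ha _ ↦ hVK _ (mem_image_of_mem _ ha)⟩

end
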